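/- arXiv:1211.4924 — 3 statements merged into one kernel-verified Lean document; each statement's English description precedes it below -/
import Mathlib

section
/- Let 4 ≤ p < q, n = p + q, and suppose 2p > q + 4. Then B_{p,q}^{2,0} ≺_s D_{p,q}^{0,1} ≺_s B_{p,q}^{0,1} ≺_s B_{p,q}^{0,0}, and every tree T ∈ 𝒯_n^{p,q} isomorphic to none of these four trees satisfies T ≺_s B_{p,q}^{2,0}; that is, the last four trees in the S-order among 𝒯_n^{p,q} are B_{p,q}^{2,0}, D_{p,q}^{0,1}, B_{p,q}^{0,1}, B_{p,q}^{0,0}. -/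
open SimpleGraph

open scoped Classical in
/-- The adjacency matrix of a simple graph, with real entries. -/
noncomputable def adjMat {V : Type*} [Fintype V] (G : SimpleGraph V) : Matrix V V ℝ :=
  Matrix.of fun a b => if G.Adj a b then 1 else 0

/-- The `k`-th spectral moment `S_k(G) = tr(A(G)^k)`. -/
noncomputable def spectralMoment {V : Type*} [Fintype V] [DecidableEq V]
    (G : SimpleGraph V) (k : ℕ) : ℝ :=
  Matrix.trace (adjMat G ^ k)

/-- `SLt G₁ G₂` means `G₁ ≺_s G₂`: for some `k` with `1 ≤ k ≤ n - 1`,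
`S_i(G₁) = S_i(G₂)` for all `i < k` and `S_k(G₁) < S_k(G₂)`. -/
def SLt {V : Type*} [Fintype V] [DecidableEq V] (G₁ G₂ : SimpleGraph V) : Prop :=
  ∃ k : ℕ, 1 ≤ k ∧ k ≤ Fintype.card V - 1 ∧
    (∀ i < k, spectralMoment G₁ i = spectralMoment G₂ i) ∧
    spectralMoment G₁ k < spectralMoment G₂ k

/-- The tree `B_{p,q}^{k,l}` on `p + q` vertices: vertex `0 = u` is adjacent to `1 = v`
and to the `q - 1` vertices `2, …, q`; the distinguished neighbor `2` of `u` carries the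
`k` pendant leaves `q+1, …, q+k`; the `l` neighbors `3, …, l+2` of `u` carry one pendant
leaf each (`q+k+j` is attached to `j+2` for `1 ≤ j ≤ l`); and `v` carries the
`p - k - l - 1` pendant leaves `q+k+l+1, …, p+q-1`. -/
def BTree (p q k l : ℕ) : SimpleGraph (Fin (p + q)) :=
  SimpleGraph.fromRel (fun a b =>
    (a.val = 0 ∧ b.val = 1) ∨
    (a.val = 0 ∧ 2 ≤ b.val ∧ b.val ≤ q) ∨
    (a.val = 2 ∧ q + 1 ≤ b.val ∧ b.val ≤ q + k) ∨
    (q + k + 1 ≤ b.val ∧ b.val ≤ q + k + l ∧ a.val = b.val - (q + k) + 2) ∨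
    (a.val = 1 ∧ q + k + l + 1 ≤ b.val))

/-- The tree `D_{p,q}^{k,l}` on `p + q` vertices: vertex `1 = v` is adjacent to `0 = u`
and to the `p - 1` vertices `2, …, p`; the distinguished neighbor `2` of `v` carries the
`k` pendant leaves `p+1, …, p+k`; the `l` neighbors `3, …, l+2` of `v` carry one pendant
leaf each; and `u` carries the `q - k - l - 1` pendant leaves `p+k+l+1, …, p+q-1`. -/
def DTree (p q k l : ℕ) : SimpleGraph (Fin (p + q)) :=
  SimpleGraph.fromRel (fun a b =>
    (a.val = 0 ∧ b.val = 1) ∨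
    (a.val = 1 ∧ 2 ≤ b.val ∧ b.val ≤ p) ∨
    (a.val = 2 ∧ p + 1 ≤ b.val ∧ b.val ≤ p + k) ∨
    (p + k + 1 ≤ b.val ∧ b.val ≤ p + k + l ∧ a.val = b.val - (p + k) + 2) ∨
    (a.val = 0 ∧ p + k + l + 1 ≤ b.val))

/-- `T ∈ 𝒯_{p+q}^{p,q}`: `T` is a tree on `p + q` vertices with a `(p,q)`-bipartition. -/
def TreeBip (p q : ℕ) (G : SimpleGraph (Fin (p + q))) : Prop :=
  G.IsTree ∧ ∃ A : Finset (Fin (p + q)), A.card = p ∧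
    ∀ ⦃x y : Fin (p + q)⦄, G.Adj x y → (x ∈ A ↔ y ∉ A)

/-- The sum of the squares of the vertex degrees. -/
noncomputable def degreeSqSum {V : Type*} [Fintype V] (G : SimpleGraph V) : ℕ :=
  open scoped Classical in ∑ x, G.degree x ^ 2

/-- The local features of a tree with a bipartition that determine its spectral moments of
order at most four from the degrees. -/
structure IsTreelike {V : Type*} [Fintype V] (G : SimpleGraph V) : Prop where
  triangle_free : ∀ x y z, G.Adj x y → G.Adj y z → ¬ G.Adj z x
  square_free : ∀ x y z w, x ≠ y → G.Adj x z → G.Adj y z → G.Adj x w → G.Adj y w → z = w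
  sum_degree : (open scoped Classical in ∑ x, G.degree x) = 2 * (Fintype.card V - 1)

section SpectralMoments

open scoped Classical

variable {V : Type*} [Fintype V] {G G₁ G₂ : SimpleGraph V}

theorem adjMat_apply (x y : V) : adjMat G x y = if G.Adj x y then 1 else 0 := by
  simp [adjMat]

theorem adjMat_symm (x y : V) : adjMat G x y = adjMat G y x := by
  simp [adjMat_apply, G.adj_comm]

theorem sum_adjMat (x : V) : ∑ y, adjMat G x y = G.degree x := by
  simp [adjMat_apply, ← G.card_neighborFinset_eq_degree, neighborFinset_eq_filter]

variable [DecidableEq V]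

theorem adjMat_sq_apply_self (x : V) : (adjMat G ^ 2) x x = G.degree x := by
  rw [pow_two, Matrix.mul_apply, ← sum_adjMat]
  refine Finset.sum_congr rfl fun y _ => ?_
  rw [adjMat_symm y x, adjMat_apply]
  split_ifs <;> simp

theorem IsTreelike.adjMat_sq_apply_sq (hG : IsTreelike G) (x y : V) (hxy : x ≠ y) :
    (adjMat G ^ 2) x y ^ 2 = (adjMat G ^ 2) x y := by
  have key : (adjMat G ^ 2) x y = if ∃ z, G.Adj x z ∧ G.Adj z y then 1 else 0 := by
    rw [pow_two, Matrix.mul_apply]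
    split_ifs with h
    · obtain ⟨z, hxz, hzy⟩ := h
      rw [Finset.sum_eq_single z]
      · simp [adjMat_apply, hxz, hzy]
      · intro w _ hwz
        by_contra hne
        simp only [adjMat_apply, mul_ite, mul_one, mul_zero, ite_eq_right_iff, one_ne_zero,
          Classical.not_imp] at hne
        exact hwz (hG.square_free x y w z hxy (by tauto) (G.adj_symm (by tauto)) hxz hzy.symm)
      · simp
    · refine Finset.sum_eq_zero fun z _ => ?_
      simp only [adjMat_apply]
      split_ifs with h₁ h₂ <;> simp
      exact h ⟨z, h₁, h₂⟩
  rw [key]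
  split_ifs <;> simp

theorem sum_adjMat_sq : ∑ x, ∑ y, (adjMat G ^ 2) x y = degreeSqSum G := by
  simp only [pow_two, Matrix.mul_apply]
  calc ∑ x, ∑ y, ∑ z, adjMat G x z * adjMat G z y
      = ∑ z, ∑ x, ∑ y, adjMat G x z * adjMat G z y := by
        rw [Finset.sum_comm]
        exact (Finset.sum_congr rfl fun _ _ => Finset.sum_comm).trans <|
          Finset.sum_comm.trans <| Finset.sum_congr rfl fun _ _ => Finset.sum_comm
    _ = ∑ z, (G.degree z : ℝ) ^ 2 := by
        refine Finset.sum_congr rfl fun z _ => ?_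
        simp_rw [← Finset.mul_sum, sum_adjMat, ← Finset.sum_mul, adjMat_symm _ z, sum_adjMat,
          pow_two]
    _ = degreeSqSum G := by simp [degreeSqSum]

theorem IsTreelike.spectralMoment_four (hG : IsTreelike G) :
    spectralMoment G 4 = 2 * degreeSqSum G - 2 * (Fintype.card V - 1 : ℕ) := by
  have hsymm : ∀ x y, (adjMat G ^ 2) x y = (adjMat G ^ 2) y x := by
    intro x y
    simp only [pow_two, Matrix.mul_apply]
    exact Finset.sum_congr rfl fun z _ => by rw [adjMat_symm x z, adjMat_symm z y, mul_comm]
  have htr : spectralMoment G 4 = ∑ x, ∑ y, (adjMat G ^ 2) x y ^ 2 := by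
    rw [spectralMoment, show 4 = 2 + 2 from rfl, pow_add, Matrix.trace]
    simp only [Matrix.diag_apply, Matrix.mul_apply]
    refine Finset.sum_congr rfl fun x _ => Finset.sum_congr rfl fun y _ => ?_
    rw [pow_two ((adjMat G ^ 2) x y)]
    rw [hsymm y x]
  have hrow : ∀ x, ∑ y, (adjMat G ^ 2) x y ^ 2 =
      ∑ y, (adjMat G ^ 2) x y + ((G.degree x : ℝ) ^ 2 - G.degree x) := by
    intro x
    rw [← Finset.add_sum_erase _ _ (Finset.mem_univ x),
      ← Finset.add_sum_erase _ (fun y => (adjMat G ^ 2) x y) (Finset.mem_univ x),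
      adjMat_sq_apply_self, Finset.sum_congr rfl fun y hy =>
        hG.adjMat_sq_apply_sq x y (Finset.ne_of_mem_erase hy).symm]
    ring
  have hd : (∑ x, (G.degree x : ℝ)) = 2 * (Fintype.card V - 1 : ℕ) := by
    exact_mod_cast hG.sum_degree
  have hs : (∑ x, (G.degree x : ℝ) ^ 2) = degreeSqSum G := by simp [degreeSqSum]
  rw [htr, Finset.sum_congr rfl fun x _ => hrow x, Finset.sum_add_distrib, sum_adjMat_sq,
    Finset.sum_sub_distrib, hd, hs]
  ring

theorem IsTreelike.spectralMoment_eq_of_lt_four (hG₁ : IsTreelike G₁)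
    (hG₂ : IsTreelike G₂) {i : ℕ} (hi : i < 4) : spectralMoment G₁ i = spectralMoment G₂ i := by
  have h₁ : ∀ G : SimpleGraph V, spectralMoment G 1 = 0 := by
    intro G
    simp [spectralMoment, Matrix.trace, adjMat_apply]
  have h₂ : ∀ G : SimpleGraph V, IsTreelike G →
      spectralMoment G 2 = 2 * (Fintype.card V - 1 : ℕ) := by
    intro G hG
    rw [spectralMoment, Matrix.trace]
    simp only [Matrix.diag_apply]
    rw [Finset.sum_congr rfl fun x _ => adjMat_sq_apply_self x]
    exact_mod_cast hG.sum_degree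
  have h₃ : ∀ G : SimpleGraph V, IsTreelike G → spectralMoment G 3 = 0 := by
    intro G hG
    rw [spectralMoment, Matrix.trace]
    refine Finset.sum_eq_zero fun x _ => ?_
    simp only [pow_succ, pow_zero, one_mul, Matrix.diag_apply, Matrix.mul_apply, Finset.sum_mul]
    refine Finset.sum_eq_zero fun y _ => Finset.sum_eq_zero fun z _ => ?_
    simp only [adjMat_apply]
    split_ifs with hxz hzy hyx <;> simp
    exact hG.triangle_free x z y hxz hzy hyx
  interval_cases i
  · simp [spectralMoment]
  · rw [h₁, h₁]
  · rw [h₂ _ hG₁, h₂ _ hG₂]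
  · rw [h₃ _ hG₁, h₃ _ hG₂]

theorem IsTreelike.sLt (hG₁ : IsTreelike G₁) (hG₂ : IsTreelike G₂)
    (hV : 5 ≤ Fintype.card V) (h : degreeSqSum G₁ < degreeSqSum G₂) : SLt G₁ G₂ := by
  refine ⟨4, by norm_num, by omega, fun i hi => hG₁.spectralMoment_eq_of_lt_four hG₂ hi, ?_⟩
  rw [hG₁.spectralMoment_four, hG₂.spectralMoment_four]
  have : (degreeSqSum G₁ : ℝ) < degreeSqSum G₂ := by exact_mod_cast h
  linarith

end SpectralMoments

/-- Adjacency in the quotient of a broom: `0` is the center, `1` and `2` are its two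
distinguished neighbors, and `3`, `4`, `5` are the leaves attached to `0`, `1`, `2`. -/
def broomAdj (i j : Fin 6) : Prop :=
  (i, j) ∈ [(0, 1), (0, 2), (0, 3), (1, 4), (2, 5), (1, 0), (2, 0), (3, 0), (4, 1), (5, 2)]

instance : DecidableRel broomAdj := fun _ _ => inferInstanceAs (Decidable (_ ∈ _))

/-- `G` is a broom: a center with two distinguished neighbors, and `s`, `a`, `b` leaves attached
to the center and to these two neighbors; `c` tells the role of each vertex. -/
structure IsBroom {V : Type*} [Fintype V] (G : SimpleGraph V) (c : V → Fin 6) (s a b : ℕ) :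
    Prop where
  adj_iff : ∀ x y, G.Adj x y ↔ broomAdj (c x) (c y)
  card_fiber : ∀ k, (Finset.univ.filter fun x => c x = k).card = ![1, 1, 1, s, a, b] k

section Brooms

open scoped Classical

variable {V W : Type*} [Fintype V] [Fintype W] {G : SimpleGraph V} {H : SimpleGraph W}
  {c : V → Fin 6} {d : W → Fin 6} {s a b : ℕ}

theorem IsBroom.nonempty_iso (hG : IsBroom G c s a b) (hH : IsBroom H d s a b) :
    Nonempty (G ≃g H) := by
  have hfib : ∀ k, Nonempty ({x // c x = k} ≃ {y // d y = k}) := fun k =>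
    Fintype.card_eq.mp <| by
      rw [Fintype.card_subtype, Fintype.card_subtype, hG.card_fiber, hH.card_fiber]
  let e : V ≃ W := (Equiv.sigmaFiberEquiv c).symm.trans <|
    (Equiv.sigmaCongrRight fun k => (hfib k).some).trans (Equiv.sigmaFiberEquiv d)
  have he : ∀ x, d (e x) = c x := fun x => ((hfib (c x)).some ⟨x, rfl⟩).2
  exact ⟨e, fun {x y} => by rw [hG.adj_iff, hH.adj_iff, he, he]⟩

theorem IsBroom.sum_comp (hG : IsBroom G c s a b) (g : Fin 6 → ℕ) :
    ∑ x, g (c x) = g 0 + g 1 + g 2 + s * g 3 + a * g 4 + b * g 5 := by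
  rw [← Finset.sum_fiberwise Finset.univ c]
  have : ∀ k, ∑ x with c x = k, g (c x) = ![1, 1, 1, s, a, b] k * g k := by
    intro k
    rw [← hG.card_fiber k, ← smul_eq_mul, ← Finset.sum_const]
    exact Finset.sum_congr rfl fun x hx => by rw [(Finset.mem_filter.mp hx).2]
  simp [this, Fin.sum_univ_six]

theorem IsBroom.card (hG : IsBroom G c s a b) : Fintype.card V = s + a + b + 3 := by
  have := hG.sum_comp fun _ => 1
  simp at this
  omega

theorem IsBroom.degree (hG : IsBroom G c s a b) (x : V) :
    G.degree x = ![s + 2, a + 1, b + 1, 1, 1, 1] (c x) := by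
  have h : G.degree x = ∑ y, if broomAdj (c x) (c y) then 1 else 0 := by
    rw [← G.card_neighborFinset_eq_degree, neighborFinset_eq_filter, Finset.card_filter]
    simp only [hG.adj_iff]
  rw [h, hG.sum_comp fun k => if broomAdj (c x) k then 1 else 0]
  generalize c x = k
  fin_cases k <;> simp [broomAdj] <;> omega

theorem IsBroom.eq_of_lt_three (hG : IsBroom G c s a b) {x y : V} (h : c x = c y)
    (hx : c x < 3) : x = y := by
  have hc : (Finset.univ.filter fun z => c z = c x).card ≤ 1 := by
    rw [hG.card_fiber]
    generalize c x = k at hx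
    fin_cases k <;> simp_all
  exact Finset.card_le_one.mp hc x (by simp) y (by simp [h])

theorem IsBroom.isTreelike (hG : IsBroom G c s a b) : IsTreelike G where
  triangle_free x y z := by
    simp only [hG.adj_iff]
    generalize c x = i, c y = j, c z = k
    revert i j k
    decide
  square_free x y z w hxy hxz hyz hxw hyw := by
    rw [hG.adj_iff] at *
    have key : ∀ i j k l, broomAdj i k → broomAdj j k → broomAdj i l → broomAdj j l →
        (k = l ∧ k < 3) ∨ (i = j ∧ i < 3) := by decide
    rcases key _ _ _ _ hxz hyz hxw hyw with ⟨h, h3⟩ | ⟨h, h3⟩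
    · exact hG.eq_of_lt_three h h3
    · exact absurd (hG.eq_of_lt_three h h3) hxy
  sum_degree := by
    simp only [hG.degree, hG.card]
    rw [hG.sum_comp]
    simp
    ring

theorem IsBroom.degreeSqSum_eq (hG : IsBroom G c s a b) :
    degreeSqSum G = (s + 2) ^ 2 + (a + 1) ^ 2 + (b + 1) ^ 2 + s + a + b := by
  simp only [degreeSqSum, hG.degree]
  rw [hG.sum_comp fun k => ![s + 2, a + 1, b + 1, 1, 1, 1] k ^ 2]
  simp

end Brooms

theorem card_fiber_val {n : ℕ} {κ : Type*} [DecidableEq κ] (r : ℕ → κ) (k : κ) (S : Finset ℕ)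
    (hS : ∀ x, x ∈ S ↔ x < n ∧ r x = k) :
    (Finset.univ.filter fun x : Fin n => r x.val = k).card = S.card := by
  rw [← Finset.card_map Fin.valEmbedding]
  congr 1
  ext x
  simp only [Finset.mem_map, Finset.mem_filter, Finset.mem_univ, true_and, Fin.valEmbedding_apply,
    hS]
  exact ⟨fun ⟨y, hy, hyx⟩ => hyx ▸ ⟨y.2, hy⟩, fun ⟨hx, hr⟩ => ⟨⟨x, hx⟩, hr, rfl⟩⟩

/-- Roles of the vertices of `BTree p q k 0`. -/
def bRole (q k x : ℕ) : Fin 6 :=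
  if x = 0 then 0 else if x = 1 then 1 else if x = 2 then 2 else if x ≤ q then 3
  else if x ≤ q + k then 5 else 4

/-- Roles of the vertices of `BTree p q 0 1`. -/
def bPendantRole (q x : ℕ) : Fin 6 :=
  if x = 0 then 0 else if x = 1 then 1 else if x = 3 then 2 else if x ≤ q then 3
  else if x = q + 1 then 5 else 4

/-- Roles of the vertices of `DTree p q 0 1`. -/
def dPendantRole (p x : ℕ) : Fin 6 :=
  if x = 1 then 0 else if x = 0 then 1 else if x = 3 then 2 else if x ≤ p then 3
  else if x = p + 1 then 5 else 4

set_option maxHeartbeats 1000000 in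
theorem isBroom_BTree {p q k : ℕ} (hq : 2 ≤ q) (hk : k + 1 ≤ p) :
    IsBroom (BTree p q k 0) (fun x => bRole q k x.val) (q - 2) (p - 1 - k) k where
  adj_iff x y := by
    obtain ⟨x, hx⟩ := x
    obtain ⟨y, hy⟩ := y
    simp only [BTree, fromRel_adj, ne_eq, Fin.mk.injEq, bRole]
    split_ifs <;> simp [broomAdj] <;> omega
  card_fiber j := by
    rw [card_fiber_val (bRole q k) j
      (![{0}, {1}, {2}, Finset.Ico 3 (q + 1),
        Finset.Ico (q + k + 1) (p + q), Finset.Ico (q + 1) (q + k + 1)] j)]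
    · fin_cases j <;> simp
      omega
    · intro x
      simp only [bRole]
      split_ifs <;> fin_cases j <;> simp <;> omega

set_option maxHeartbeats 1000000 in
theorem isBroom_BTree_zero_one {p q : ℕ} (hq : 3 ≤ q) (hp : 2 ≤ p) :
    IsBroom (BTree p q 0 1) (fun x => bPendantRole q x.val) (q - 2) (p - 2) 1 where
  adj_iff x y := by
    obtain ⟨x, hx⟩ := x
    obtain ⟨y, hy⟩ := y
    simp only [BTree, fromRel_adj, ne_eq, Fin.mk.injEq, bPendantRole]
    split_ifs <;> simp [broomAdj] <;> omega
  card_fiber j := by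
    rw [card_fiber_val (bPendantRole q) j
      (![{0}, {1}, {3}, insert 2 (Finset.Ico 4 (q + 1)),
        Finset.Ico (q + 2) (p + q), {q + 1}] j)]
    · fin_cases j <;> simp <;> omega
    · intro x
      simp only [bPendantRole]
      split_ifs <;> fin_cases j <;> simp <;> omega

set_option maxHeartbeats 1000000 in
theorem isBroom_DTree_zero_one {p q : ℕ} (hp : 3 ≤ p) (hq : 2 ≤ q) :
    IsBroom (DTree p q 0 1) (fun x => dPendantRole p x.val) (p - 2) (q - 2) 1 where
  adj_iff x y := by
    obtain ⟨x, hx⟩ := x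
    obtain ⟨y, hy⟩ := y
    simp only [DTree, fromRel_adj, ne_eq, Fin.mk.injEq, dPendantRole]
    split_ifs <;> simp [broomAdj] <;> omega
  card_fiber j := by
    rw [card_fiber_val (dPendantRole p) j
      (![{1}, {0}, {3}, insert 2 (Finset.Ico 4 (p + 1)),
        Finset.Ico (p + 2) (p + q), {p + 1}] j)]
    · fin_cases j <;> simp <;> omega
    · intro x
      simp only [dPendantRole]
      split_ifs <;> fin_cases j <;> simp <;> omega

section SumsOfSquares

variable {ι : Type*} {S : Finset ι} {e : ι → ℕ} {N : ℕ}

theorem sum_sq_le_mul_sum {M : ℕ} (hM : ∀ i ∈ S, e i ≤ M) :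
    ∑ i ∈ S, e i ^ 2 ≤ M * ∑ i ∈ S, e i := by
  rw [Finset.mul_sum]
  exact Finset.sum_le_sum fun i hi => by rw [pow_two]; exact Nat.mul_le_mul_right _ (hM i hi)

theorem sum_sq_le_sq_sum : ∑ i ∈ S, e i ^ 2 ≤ (∑ i ∈ S, e i) ^ 2 := by
  rw [pow_two (∑ i ∈ S, e i)]
  exact sum_sq_le_mul_sum fun i hi => Finset.single_le_sum (fun _ _ => Nat.zero_le _) hi

variable [DecidableEq ι]

/-- Natural numbers below their sum `N` have sum of squares at most `(N - 1)² + 1`. -/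
theorem sum_sq_le_of_lt_sum (hN : 2 ≤ N) (hsum : ∑ i ∈ S, e i = N) (hlt : ∀ i ∈ S, e i < N) :
    ∑ i ∈ S, e i ^ 2 ≤ (N - 1) ^ 2 + 1 := by
  obtain ⟨M, rfl⟩ : ∃ M, N = M + 2 := ⟨N - 2, by omega⟩
  by_cases hx : ∃ x ∈ S, e x = M + 1
  · obtain ⟨x, hxS, hx⟩ := hx
    rw [← Finset.add_sum_erase _ _ hxS] at hsum ⊢
    have h := sum_sq_le_sq_sum (S := S.erase x) (e := e)
    rw [show ∑ i ∈ S.erase x, e i = 1 by omega] at h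
    rw [hx]
    simpa using h
  · have h := sum_sq_le_mul_sum (S := S) (e := e) (M := M) fun i hi => by
      have := hlt i hi
      have : e i ≠ M + 1 := fun h => hx ⟨i, hi, h⟩
      omega
    rw [hsum] at h
    simp only [show M + 2 - 1 = M + 1 by omega]
    nlinarith

/-- Among natural numbers with sum `N`, either two of them make up the whole sum with the second
one at most `2`, or the sum of squares is less than `(N - 2)² + 2²`. -/
theorem sum_sq_lt_or_exists_pair (hN : 5 ≤ N) (hS : 2 ≤ S.card) (hsum : ∑ i ∈ S, e i = N) :
    ∑ i ∈ S, e i ^ 2 < (N - 2) ^ 2 + 4 ∨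
      ∃ x ∈ S, ∃ y ∈ S, x ≠ y ∧ e x + e y = N ∧ e y ≤ 2 := by
  obtain ⟨x, hxS, hmax⟩ := S.exists_max_image e (Finset.card_pos.mp (by omega))
  obtain ⟨y, hyS, hmay⟩ := (S.erase x).exists_max_image e
    (Finset.card_pos.mp (by rw [Finset.card_erase_of_mem hxS]; omega))
  have hle := sum_sq_le_mul_sum hmax
  have hle' := sum_sq_le_mul_sum hmay
  have hle'' := sum_sq_le_sq_sum (S := S.erase x) (e := e)
  have hyx := hmax y (Finset.mem_of_mem_erase hyS)
  have hsum' := Finset.add_sum_erase S e hxS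
  have hsq := Finset.add_sum_erase S (fun i => e i ^ 2) hxS
  have hy := Finset.single_le_sum (f := e) (fun _ _ => Nat.zero_le _) hyS
  have hlow : ∑ i ∈ S.erase x, e i ≤ ∑ i ∈ S.erase x, e i ^ 2 :=
    Finset.sum_le_sum fun i _ => Nat.le_self_pow two_ne_zero _
  rw [← hsq]
  rw [hsum] at hsum'
  rw [← hsq, hsum] at hle
  generalize ∑ i ∈ S.erase x, e i ^ 2 = Q at *
  generalize ∑ i ∈ S.erase x, e i = t at *
  obtain ⟨M, rfl⟩ : ∃ M, N = M + 2 := ⟨N - 2, by omega⟩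
  simp only [Nat.add_sub_cancel]
  by_cases hpair : e y = t ∧ t ≤ 2
  · exact Or.inr ⟨x, hxS, y, Finset.mem_of_mem_erase hyS, (Finset.ne_of_mem_erase hyS).symm,
      by omega, by omega⟩
  left
  generalize e y = v at *
  generalize e x = E at *
  rcases Nat.lt_or_ge t 3 with ht | ht
  · have hv : v ≤ 1 := by omega
    obtain rfl : t = 2 := by
      interval_cases t <;> omega
    obtain rfl : E = M := by omega
    nlinarith
  · rcases Nat.lt_or_ge E t with hE | hE
    · nlinarith
    · obtain ⟨t', rfl⟩ : ∃ t', t = t' + 3 := ⟨t - 3, by omega⟩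
      obtain ⟨E', rfl⟩ : ∃ E', E = E' + 3 := ⟨E - 3, by omega⟩
      obtain rfl : M = E' + t' + 4 := by omega
      nlinarith [Nat.zero_le (E' * t')]

end SumsOfSquares

/-- `G` is a tree with bipartition `(A, B)`. -/
structure IsTreeWithParts {V : Type*} [Fintype V] (G : SimpleGraph V) (A B : Finset V) : Prop where
  isTree : G.IsTree
  mem_iff : ∀ x, x ∈ B ↔ x ∉ A
  adj : ∀ ⦃x y⦄, G.Adj x y → (x ∈ A ↔ y ∈ B)
  left_nonempty : A.Nonempty
  right_nonempty : B.Nonempty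

namespace IsTreeWithParts

open scoped Classical

variable {V : Type*} [Fintype V] {G : SimpleGraph V} {A B : Finset V}

theorem symm (hG : IsTreeWithParts G A B) : IsTreeWithParts G B A where
  isTree := hG.isTree
  mem_iff x := by rw [hG.mem_iff, not_not]
  adj _ _ hxy := (hG.adj hxy.symm).symm
  left_nonempty := hG.right_nonempty
  right_nonempty := hG.left_nonempty

theorem sum_add_sum (hG : IsTreeWithParts G A B) (f : V → ℕ) :
    ∑ x ∈ A, f x + ∑ x ∈ B, f x = ∑ x, f x := by
  have hB : B = Aᶜ := by ext x; rw [hG.mem_iff, Finset.mem_compl]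
  rw [hB, Finset.sum_add_sum_compl]

theorem card_add_card (hG : IsTreeWithParts G A B) : A.card + B.card = Fintype.card V := by
  simpa using hG.sum_add_sum fun _ => 1

theorem one_le_degree (hG : IsTreeWithParts G A B) (x : V) : 1 ≤ G.degree x := by
  obtain ⟨y, hy⟩ := hG.left_nonempty
  obtain ⟨z, hz⟩ := hG.right_nonempty
  have : Nontrivial V := ⟨y, z, fun h => (hG.mem_iff z).mp hz (h ▸ hy)⟩
  exact hG.isTree.connected.preconnected.degree_pos_of_nontrivial x

theorem neighborFinset_subset (hG : IsTreeWithParts G A B) {x : V} (hx : x ∈ A) :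
    G.neighborFinset x ⊆ B := fun y hy =>
  (hG.adj ((G.mem_neighborFinset x y).mp hy)).mp hx

theorem degree_le (hG : IsTreeWithParts G A B) {x : V} (hx : x ∈ A) : G.degree x ≤ B.card :=
  Finset.card_le_card (hG.neighborFinset_subset hx)

theorem isBipartiteWith (hG : IsTreeWithParts G A B) : G.IsBipartiteWith A B where
  disjoint := by
    rw [Set.disjoint_left]
    exact fun x hx hx' => (hG.mem_iff x).mp hx' hx
  mem_of_adj x y hxy := by
    have h₁ := hG.adj hxy
    have h₂ := hG.mem_iff x
    have h₃ := hG.mem_iff y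
    simp only [Finset.mem_coe]
    tauto

theorem sum_degree (hG : IsTreeWithParts G A B) :
    ∑ x ∈ A, G.degree x = A.card + B.card - 1 := by
  have h := isBipartiteWith_sum_degrees_eq_card_edges hG.isBipartiteWith
  have h' := hG.isTree.card_edgeFinset
  rw [h, hG.card_add_card, ← h', Nat.add_sub_cancel]

theorem sum_degree_sub_one (hG : IsTreeWithParts G A B) :
    ∑ x ∈ A, (G.degree x - 1) = B.card - 1 := by
  have h := hG.sum_degree
  have hsum : ∑ x ∈ A, G.degree x = ∑ x ∈ A, (G.degree x - 1) + A.card := by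
    rw [Finset.card_eq_sum_ones, ← Finset.sum_add_distrib]
    exact Finset.sum_congr rfl fun x _ => (Nat.sub_add_cancel (hG.one_le_degree x)).symm
  have := hG.right_nonempty.card_pos
  omega

theorem isTreelike (hG : IsTreeWithParts G A B) : IsTreelike G where
  triangle_free x y z hxy hyz hzx := by
    have := hG.adj hxy
    have := hG.adj hyz
    have := hG.adj hzx
    have := hG.mem_iff x
    have := hG.mem_iff y
    have := hG.mem_iff z
    tauto
  square_free x y z w hxy hxz hyz hxw hyw := by
    have hpath : ∀ v (hxv : G.Adj x v) (hyv : G.Adj y v),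
        (Walk.cons hxv (Walk.cons hyv.symm Walk.nil)).IsPath := by
      intro v hxv hyv
      simp [hxy, hxv.ne, hyv.ne.symm]
    have h := (isAcyclic_iff_subsingleton_path.mp hG.isTree.isAcyclic x y).elim
      ⟨_, hpath z hxz hyz⟩ ⟨_, hpath w hxw hyw⟩
    have := congrArg (fun p : G.Path x y => p.1.support) h
    simpa using this
  sum_degree := by
    rw [← hG.sum_add_sum, hG.sum_degree, hG.symm.sum_degree, ← hG.card_add_card]
    omega

theorem sum_degree_sq (hG : IsTreeWithParts G A B) :
    ∑ x ∈ A, G.degree x ^ 2 = ∑ x ∈ A, (G.degree x - 1) ^ 2 + 2 * (B.card - 1) + A.card := by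
  rw [← hG.sum_degree_sub_one, Finset.mul_sum, Finset.card_eq_sum_ones, ← Finset.sum_add_distrib,
    ← Finset.sum_add_distrib]
  refine Finset.sum_congr rfl fun x _ => ?_
  obtain ⟨k, hk⟩ := Nat.exists_eq_add_of_le (hG.one_le_degree x)
  rw [hk, Nat.add_sub_cancel_left]
  ring

theorem degreeSqSum_eq (hG : IsTreeWithParts G A B) :
    degreeSqSum G = ∑ x ∈ A, (G.degree x - 1) ^ 2 + ∑ x ∈ B, (G.degree x - 1) ^ 2 +
      2 * (B.card - 1) + A.card + 2 * (A.card - 1) + B.card := by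
  rw [degreeSqSum, ← hG.sum_add_sum, hG.sum_degree_sq, hG.symm.sum_degree_sq]
  ring

theorem degree_eq_one (hG : IsTreeWithParts G A B) {u x : V} (hu : u ∈ A)
    (hdeg : G.degree u = B.card) (hx : x ∈ A) (hxu : x ≠ u) : G.degree x = 1 := by
  have h := hG.sum_degree_sub_one
  rw [← Finset.add_sum_erase _ _ hu, hdeg] at h
  have := Finset.single_le_sum (f := fun x => G.degree x - 1) (fun _ _ => Nat.zero_le _)
    (Finset.mem_erase.mpr ⟨hxu, hx⟩)
  have := hG.one_le_degree x
  omega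

theorem sum_sq_of_degree_eq (hG : IsTreeWithParts G A B) {u : V} (hu : u ∈ A)
    (hdeg : G.degree u = B.card) : ∑ x ∈ A, (G.degree x - 1) ^ 2 = (B.card - 1) ^ 2 := by
  rw [← Finset.add_sum_erase _ _ hu, hdeg, Finset.sum_eq_zero, add_zero]
  intro x hx
  rw [hG.degree_eq_one hu hdeg (Finset.mem_of_mem_erase hx) (Finset.ne_of_mem_erase hx)]
  rfl

theorem adj_of_degree_eq (hG : IsTreeWithParts G A B) {u y : V} (hu : u ∈ A)
    (hdeg : G.degree u = B.card) (hy : y ∈ B) : G.Adj u y := by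
  rw [← G.mem_neighborFinset, Finset.eq_of_subset_of_card_le (hG.neighborFinset_subset hu)]
  · exact hy
  · rw [G.card_neighborFinset_eq_degree, hdeg]

theorem exists_isBroom (hG : IsTreeWithParts G A B) {u x y : V} (hu : u ∈ A)
    (hdeg : G.degree u = B.card) (hx : x ∈ B) (hy : y ∈ B) (hxy : x ≠ y)
    (hsum : (G.degree x - 1) + (G.degree y - 1) = A.card - 1) :
    ∃ c, IsBroom G c (B.card - 2) (G.degree x - 1) (G.degree y - 1) := by
  have hB : ∀ z, z ∈ B ↔ z ∉ A := hG.mem_iff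
  have hux := hG.adj_of_degree_eq hu hdeg hx
  have huy := hG.adj_of_degree_eq hu hdeg hy
  have hleaf : ∀ w ∈ B, w ≠ x → w ≠ y → ∀ z, G.Adj z w → z = u := by
    intro w hw hwx hwy z hzw
    have h := hG.symm.sum_degree_sub_one
    rw [← Finset.add_sum_erase _ _ hx, ← Finset.add_sum_erase _ _
      (Finset.mem_erase.mpr ⟨hxy.symm, hy⟩)] at h
    have hle := Finset.single_le_sum (f := fun x => G.degree x - 1) (fun _ _ => Nat.zero_le _)
      (Finset.mem_erase.mpr ⟨hwy, Finset.mem_erase.mpr ⟨hwx, hw⟩⟩)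
    have h1 : (G.neighborFinset w).card ≤ 1 := by
      rw [G.card_neighborFinset_eq_degree]
      omega
    exact Finset.card_le_one.mp h1 z (by simpa using hzw.symm) u
      (by simpa using (hG.adj_of_degree_eq hu hdeg hw).symm)
  have huniq : ∀ z ∈ A, z ≠ u → (G.Adj z y ↔ ¬ G.Adj z x) := by
    intro z hz hzu
    have h1 : (G.neighborFinset z).card = 1 := by
      rw [G.card_neighborFinset_eq_degree, hG.degree_eq_one hu hdeg hz hzu]
    obtain ⟨w, hw⟩ := Finset.card_eq_one.mp h1
    have hadj : ∀ v, G.Adj z v ↔ v = w := fun v => by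
      rw [← G.mem_neighborFinset, hw, Finset.mem_singleton]
    have hzw := (hadj w).mpr rfl
    have hwB := (hG.adj hzw).mp hz
    rw [hadj, hadj]
    by_cases hwx : w = x
    · subst hwx; simp [hxy.symm]
    · by_cases hwy : w = y
      · subst hwy; simp [hxy]
      · exact absurd (hleaf w hwB hwx hwy z hzw) hzu
  have hxA : x ∉ A := (hB x).mp hx
  have hyA : y ∉ A := (hB y).mp hy
  have hux' : u ≠ x := hux.ne
  have huy' : u ≠ y := huy.ne
  let c : V → Fin 6 := fun z =>
    if z = u then 0 else if z = x then 1 else if z = y then 2 else if z ∈ B then 3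
    else if G.Adj z x then 4 else 5
  have hAB : ∀ z ∈ A, ∀ w ∈ B, (G.Adj z w ↔ broomAdj (c z) (c w)) := by
    intro z hz w hw
    have hzB : z ∉ B := fun h => (hB z).mp h hz
    have hwu : w ≠ u := fun h => (hB w).mp hw (h ▸ hu)
    have hzx : z ≠ x := fun h => hxA (h ▸ hz)
    have hzy : z ≠ y := fun h => hyA (h ▸ hz)
    by_cases hzu : z = u
    · subst hzu
      have := hG.adj_of_degree_eq hu hdeg hw
      simp only [c, hwu, hw, this, if_true, if_false]
      split_ifs <;> simp [broomAdj]
    · have h := huniq z hz hzu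
      by_cases hwx : w = x
      · subst hwx
        by_cases hadj : G.Adj z w <;> simp [c, hzu, hzx, hzy, hzB, hwu, hadj, broomAdj]
      · by_cases hwy : w = y
        · subst hwy
          by_cases hadj : G.Adj z x <;>
            simp [c, hzu, hzx, hzy, hzB, hwu, hadj, h, hwx, broomAdj]
        · have hn : ¬ G.Adj z w := fun hadj => hzu (hleaf w hw hwx hwy z hadj)
          by_cases hadj : G.Adj z x <;>
            simp [c, hzu, hzx, hzy, hzB, hwu, hadj, hn, hwx, hwy, hw, broomAdj]
  have hparity : ∀ z, z ∈ A ↔ (c z = 0 ∨ c z = 4 ∨ c z = 5) := by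
    intro z
    simp only [c]
    split_ifs <;> simp_all
  have hsymm : ∀ i j, broomAdj i j → broomAdj j i := by decide
  have hbip : ∀ i j, broomAdj i j →
    ((i = 0 ∨ i = 4 ∨ i = 5) ↔ ¬ (j = 0 ∨ j = 4 ∨ j = 5)) := by decide
  refine ⟨c, fun z w => ?_, fun k => ?_⟩
  · by_cases hz : z ∈ A
    · by_cases hw : w ∈ B
      · exact hAB z hz w hw
      · refine ⟨fun h => absurd ((hG.adj h).mp hz) hw, fun h => ?_⟩
        have := hbip _ _ h
        rw [← hparity, ← hparity] at this
        exact absurd ((hB w).mpr (this.mp hz)) hw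
    · by_cases hw : w ∈ A
      · rw [G.adj_comm, hAB w hw z ((hB z).mpr hz)]
        exact ⟨hsymm _ _, hsymm _ _⟩
      · refine ⟨fun h => absurd ((hG.adj h).mpr ((hB w).mpr hw)) hz, fun h => ?_⟩
        have := hbip _ _ h
        rw [← hparity, ← hparity] at this
        exact absurd (this.mpr hw) hz
  · have hcard : ∀ k, (Finset.univ.filter fun z => c z = k) =
        ![{u}, {x}, {y}, (B.erase x).erase y, (G.neighborFinset x).erase u,
          (G.neighborFinset y).erase u] k := by
      intro k
      ext z
      have hzx : G.Adj x z ↔ G.Adj z x := G.adj_comm _ _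
      have hzy : G.Adj y z ↔ G.Adj z y := G.adj_comm _ _
      have h₁ := huniq z
      have h₂ := hB z
      have h₃ : G.Adj z x → z ∈ A := fun h => (hG.adj h).mpr hx
      have h₄ : G.Adj z y → z ∈ A := fun h => (hG.adj h).mpr hy
      simp only [Finset.mem_filter, Finset.mem_univ, true_and, c]
      clear hleaf huniq hAB hparity hsymm hbip hsum hdeg
      fin_cases k <;> simp <;> grind
    rw [hcard]
    fin_cases k
    · simp
    · simp
    · simp
    · simp [Finset.card_erase_of_mem, hx, hy, hxy.symm, Nat.sub_sub]
    · simp [Finset.card_erase_of_mem, hux.symm]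
    · simp [Finset.card_erase_of_mem, huy.symm]

end IsTreeWithParts

/-- For `4 ≤ p < q`, `n = p + q` and `2p > q + 4`, one has
`B_{p,q}^{2,0} ≺_s D_{p,q}^{0,1} ≺_s B_{p,q}^{0,1} ≺_s B_{p,q}^{0,0}`, and every tree
`T ∈ 𝒯_n^{p,q}` isomorphic to none of these four trees satisfies
`T ≺_s B_{p,q}^{2,0}`: the last four trees in the S-order among `𝒯_n^{p,q}` are
`B_{p,q}^{2,0}, D_{p,q}^{0,1}, B_{p,q}^{0,1}, B_{p,q}^{0,0}`. -/
theorem stmt_11 (p q : ℕ) (hp : 4 ≤ p) (hpq : p < q) (h : q + 4 < 2 * p) :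
    SLt (BTree p q 2 0) (DTree p q 0 1) ∧
    SLt (DTree p q 0 1) (BTree p q 0 1) ∧
    SLt (BTree p q 0 1) (BTree p q 0 0) ∧
    ∀ T : SimpleGraph (Fin (p + q)), TreeBip p q T →
      ¬ Nonempty (T ≃g BTree p q 2 0) → ¬ Nonempty (T ≃g DTree p q 0 1) →
      ¬ Nonempty (T ≃g BTree p q 0 1) → ¬ Nonempty (T ≃g BTree p q 0 0) →
      SLt T (BTree p q 2 0) := by
  have hB₂ := isBroom_BTree (p := p) (q := q) (k := 2) (by omega) (by omega)
  have hB₀ := isBroom_BTree (p := p) (q := q) (k := 0) (by omega) (by omega)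
  have hB₁ := isBroom_BTree_zero_one (p := p) (q := q) (by omega) (by omega)
  have hD := isBroom_DTree_zero_one (p := p) (q := q) (by omega) (by omega)
  have hcard : 5 ≤ Fintype.card (Fin (p + q)) := by rw [Fintype.card_fin]; omega
  obtain ⟨p, rfl⟩ : ∃ p', p = p' + 3 := ⟨p - 3, by omega⟩
  obtain ⟨q, rfl⟩ : ∃ q', q = q' + 3 := ⟨q - 3, by omega⟩
  simp only [show q + 3 - 2 = q + 1 by omega, show p + 3 - 2 = p + 1 by omega,
    show p + 3 - 1 - 2 = p by omega, show p + 3 - 1 - 0 = p + 2 by omega] at hB₂ hB₀ hB₁ hD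
  refine ⟨hB₂.isTreelike.sLt hD.isTreelike hcard ?_, hD.isTreelike.sLt hB₁.isTreelike hcard ?_,
    hB₁.isTreelike.sLt hB₀.isTreelike hcard ?_, ?_⟩
  · rw [hB₂.degreeSqSum_eq, hD.degreeSqSum_eq]
    nlinarith
  · rw [hD.degreeSqSum_eq, hB₁.degreeSqSum_eq]
    nlinarith
  · rw [hB₁.degreeSqSum_eq, hB₀.degreeSqSum_eq]
    nlinarith
  classical
  rintro T ⟨hT, A, hA, hadj⟩ hT₂ hTD hT₁ hT₀
  have hBcard : Aᶜ.card = q + 3 := by rw [Finset.card_compl, Fintype.card_fin, hA]; omega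
  have hG : IsTreeWithParts T A Aᶜ :=
    { isTree := hT
      mem_iff := fun x => Finset.mem_compl
      adj := fun x y hxy => by rw [Finset.mem_compl]; exact hadj hxy
      left_nonempty := Finset.card_pos.mp (by omega)
      right_nonempty := Finset.card_pos.mp (by omega) }
  refine hG.isTreelike.sLt hB₂.isTreelike hcard ?_
  have hsumA := hG.sum_degree_sub_one
  have hsumB := hG.symm.sum_degree_sub_one
  rw [hG.degreeSqSum_eq, hB₂.degreeSqSum_eq]
  rw [hBcard] at hsumA
  rw [hA] at hsumB
  rw [hA, hBcard]
  simp only [show q + 3 - 1 = q + 2 by omega,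
    show p + 3 - 1 = p + 2 by omega] at hsumA hsumB ⊢
  by_cases hu : ∃ u ∈ A, T.degree u = Aᶜ.card
  · obtain ⟨u, hu, hdeg⟩ := hu
    rw [hG.sum_sq_of_degree_eq hu hdeg, hBcard]
    rcases sum_sq_lt_or_exists_pair (by omega) (by omega) hsumB with
      hlt | ⟨x, hx, y, hy, hxy, hs, hy2⟩
    · simp only [Nat.add_sub_cancel, show q + 3 - 1 = q + 2 by omega] at hlt ⊢
      nlinarith
    · obtain ⟨c, hc⟩ := hG.exists_isBroom hu hdeg hx hy hxy (by rw [hs, hA]; omega)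
      rw [hBcard, show T.degree x - 1 = p + 2 - (T.degree y - 1) by omega] at hc
      exfalso
      generalize T.degree y - 1 = k at hc hy2
      interval_cases k
      · exact hT₀ (hc.nonempty_iso hB₀)
      · exact hT₁ (hc.nonempty_iso hB₁)
      · exact hT₂ (hc.nonempty_iso hB₂)
  · have hltA : ∀ x ∈ A, T.degree x - 1 < q + 2 := by
      intro x hx
      have h₁ := hG.degree_le hx
      have h₂ : T.degree x ≠ Aᶜ.card := fun h => hu ⟨x, hx, h⟩
      omega
    have hboundA := sum_sq_le_of_lt_sum (by omega) hsumA hltA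
    by_cases hv : ∃ v ∈ Aᶜ, T.degree v = A.card
    · obtain ⟨v, hv, hdeg⟩ := hv
      rw [hG.symm.sum_sq_of_degree_eq hv hdeg, hA]
      rcases sum_sq_lt_or_exists_pair (by omega) (by omega) hsumA with
      hlt | ⟨x, hx, y, hy, hxy, hs, hy2⟩
      · simp only [Nat.add_sub_cancel, show p + 3 - 1 = p + 2 by omega] at hlt ⊢
        nlinarith
      · obtain ⟨c, hc⟩ := hG.symm.exists_isBroom hv hdeg hx hy hxy (by rw [hs, hBcard]; omega)
        have hxlt := hltA x hx
        have hsq := hc.degreeSqSum_eq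
        rw [hG.degreeSqSum_eq, hG.symm.sum_sq_of_degree_eq hv hdeg, hA, hBcard] at hsq
        rw [hA] at hc
        rw [show T.degree x - 1 = q + 2 - (T.degree y - 1) by omega] at hc hsq
        have hpos : 1 ≤ T.degree y - 1 := by omega
        clear hs
        generalize T.degree y - 1 = k at *
        interval_cases k
        · exact absurd (hc.nonempty_iso hD) hTD
        · simp only [show p + 3 - 1 = p + 2 by omega, show q + 3 - 1 = q + 2 by omega,
            show p + 3 - 2 = p + 1 by omega, show q + 2 - 2 = q by omega] at hsq ⊢
          nlinarith
    · have hltB : ∀ x ∈ Aᶜ, T.degree x - 1 < p + 2 := by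
        intro x hx
        have h₁ := hG.symm.degree_le hx
        have h₂ : T.degree x ≠ A.card := fun h => hv ⟨x, hx, h⟩
        omega
      have hboundB := sum_sq_le_of_lt_sum (by omega) hsumB hltB
      simp only [show q + 2 - 1 = q + 1 by omega, show p + 2 - 1 = p + 1 by omega]
        at hboundA hboundB
      nlinarith
end

section
/- Let 4 ≤ p ≤ q and n = p + q. Then S_i(B_{p,q}^{0,2}) = S_i(B_{p,q}^{2,0}) for i = 0, 1, 2, 3 and S_4(B_{p,q}^{2,0}) − S_4(B_{p,q}^{0,2}) = 4 > 0; in particular B_{p,q}^{0,2} ≺_s B_{p,q}^{2,0}. -/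
open SimpleGraph

theorem adjMat_eq_adjMatrix {V : Type*} [Fintype V] (G : SimpleGraph V) [DecidableRel G.Adj] :
    adjMat G = G.adjMatrix ℝ := by
  ext a b
  simp [adjMat, adjMatrix_apply]

theorem adjMatrix_sq_apply_eq_card {V : Type*} [Fintype V] (G : SimpleGraph V) [DecidableRel G.Adj] (a b : V) :
    (G.adjMatrix ℝ * G.adjMatrix ℝ) a b =
      ((Finset.univ.filter fun x => G.Adj a x ∧ G.Adj x b).card : ℝ) := by
  simp only [Matrix.mul_apply, adjMatrix_apply, Finset.card_filter, Nat.cast_sum, Nat.cast_ite,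
    Nat.cast_one, Nat.cast_zero, mul_ite, mul_one, mul_zero, ite_and]
  exact Finset.sum_congr rfl fun x _ => by split_ifs <;> rfl

section Moments

variable {V : Type*} [Fintype V] [DecidableEq V]

theorem spectralMoment_zero (G : SimpleGraph V) : spectralMoment G 0 = Fintype.card V := by
  simp [spectralMoment]

theorem spectralMoment_one (G : SimpleGraph V) : spectralMoment G 1 = 0 := by
  classical
  simp [spectralMoment, adjMat_eq_adjMatrix]

theorem spectralMoment_two (G : SimpleGraph V) [DecidableRel G.Adj] :
    spectralMoment G 2 = ∑ a, (G.degree a : ℝ) := by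
  simp only [spectralMoment, adjMat_eq_adjMatrix, pow_two, Matrix.trace, Matrix.diag_apply,
    adjMatrix_mul_self_apply_self]

/-- The third moment of a triangle-free graph vanishes. -/
theorem spectralMoment_three (G : SimpleGraph V)
    (h : ∀ a b x, G.Adj a x → G.Adj x b → ¬ G.Adj b a) : spectralMoment G 3 = 0 := by
  classical
  rw [spectralMoment, adjMat_eq_adjMatrix, pow_succ, pow_two, Matrix.trace]
  refine Finset.sum_eq_zero fun a _ => ?_
  rw [Matrix.diag_apply, Matrix.mul_apply]
  refine Finset.sum_eq_zero fun b _ => ?_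
  by_cases hba : G.Adj b a
  · rw [adjMatrix_sq_apply_eq_card, Finset.filter_false_of_mem fun x _ hx => h a b x hx.1 hx.2 hba]
    simp
  · simp [adjMatrix_apply, hba]

/-- The fourth moment of a graph without 4-cycles is determined by its degrees. -/
theorem spectralMoment_four (G : SimpleGraph V) [DecidableRel G.Adj]
    (h : ∀ a b x y, a ≠ b → G.Adj a x → G.Adj x b → G.Adj a y → G.Adj y b → x = y) :
    spectralMoment G 4 = ∑ a, (2 * (G.degree a : ℝ) ^ 2 - G.degree a) := by
  set C := G.adjMatrix ℝ * G.adjMatrix ℝ with hC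
  have hsymm (a b : V) : C b a = C a b := by
    simp only [hC, adjMatrix_sq_apply_eq_card, G.adj_comm, and_comm]
  have hdiag (a : V) : C a a = G.degree a := adjMatrix_mul_self_apply_self G a
  have hsq (a b : V) :
      C a b * C b a = C a b + if a = b then (G.degree a : ℝ) ^ 2 - G.degree a else 0 := by
    split_ifs with hab
    · subst hab
      rw [hdiag]
      ring
    · have hle : (Finset.univ.filter fun x => G.Adj a x ∧ G.Adj x b).card ≤ 1 := by
        refine Finset.card_le_one.2 fun x hx y hy => ?_
        simp only [Finset.mem_filter, Finset.mem_univ, true_and] at hx hy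
        exact h a b x y hab hx.1 hx.2 hy.1 hy.2
      rw [hsymm a b, hC, adjMatrix_sq_apply_eq_card]
      interval_cases (Finset.univ.filter fun x => G.Adj a x ∧ G.Adj x b).card <;> simp
  have hrow (x : V) : ∑ b, G.adjMatrix ℝ x b = G.degree x := by
    simp [adjMatrix_apply, ← card_neighborFinset_eq_degree, neighborFinset_eq_filter]
  have hcol (x : V) : ∑ a, G.adjMatrix ℝ a x = G.degree x := by
    rw [← hrow]
    simp only [adjMatrix_apply, G.adj_comm]
  have htotal : ∑ a, ∑ b, C a b = ∑ x, (G.degree x : ℝ) ^ 2 := by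
    calc ∑ a, ∑ b, C a b
        = ∑ a, ∑ x, ∑ b, G.adjMatrix ℝ a x * G.adjMatrix ℝ x b :=
          Finset.sum_congr rfl fun a _ => Finset.sum_comm
      _ = ∑ x, ∑ a, ∑ b, G.adjMatrix ℝ a x * G.adjMatrix ℝ x b := Finset.sum_comm
      _ = ∑ x, (G.degree x : ℝ) ^ 2 := by
          simp only [← Finset.mul_sum, hrow, ← Finset.sum_mul, hcol, pow_two]
  have htrace : spectralMoment G 4 = ∑ a, ∑ b, C a b * C b a := by
    rw [spectralMoment, adjMat_eq_adjMatrix, show 4 = 2 + 2 from rfl, pow_add, pow_two]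
    rfl
  rw [htrace]
  simp only [hsq, Finset.sum_add_distrib, htotal, Finset.sum_ite_eq, Finset.mem_univ, if_true]
  rw [← Finset.sum_add_distrib]
  exact Finset.sum_congr rfl fun a _ => by ring

end Moments

section LowerNeighbor

variable {V : Type*} [LinearOrder V] {G : SimpleGraph V}

/-- Every vertex has at most one smaller neighbor; such a graph is a forest. -/
def AtMostOneLowerNeighbor (G : SimpleGraph V) : Prop :=
  ∀ a b c, G.Adj a c → G.Adj b c → a < c → b < c → a = b

theorem AtMostOneLowerNeighbor.not_triangle (h : AtMostOneLowerNeighbor G) (a b x : V)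
    (hax : G.Adj a x) (hxb : G.Adj x b) : ¬ G.Adj b a := by
  intro hba
  have h₁ := h a b x hax hxb.symm
  have h₂ := h a x b hba.symm hxb
  have h₃ := h b x a hba hax.symm
  rcases hax.ne.lt_or_gt with hax' | hax' <;> rcases hxb.ne.lt_or_gt with hxb' | hxb' <;>
    rcases hba.ne.lt_or_gt with hba' | hba' <;> grind

theorem AtMostOneLowerNeighbor.common_neighbor_unique (h : AtMostOneLowerNeighbor G)
    (a b x y : V) (hab : a ≠ b) (hax : G.Adj a x) (hxb : G.Adj x b) (hay : G.Adj a y)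
    (hyb : G.Adj y b) : x = y := by
  have h₁ := h a b x hax hxb.symm
  have h₂ := h a b y hay hyb.symm
  have h₃ := h x y a hax.symm hay.symm
  have h₄ := h x y b hxb hyb
  rcases hax.ne.lt_or_gt with hax' | hax' <;> rcases hxb.ne.lt_or_gt with hxb' | hxb' <;>
    rcases hay.ne.lt_or_gt with hay' | hay' <;> rcases hyb.ne.lt_or_gt with hyb' | hyb' <;> grind

end LowerNeighbor

theorem BTree_adj_iff {p q k l : ℕ} (a b : Fin (p + q)) :
    (BTree p q k l).Adj a b ↔ a.val ≠ b.val ∧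
      (((a.val = 0 ∧ b.val = 1) ∨ (a.val = 0 ∧ 2 ≤ b.val ∧ b.val ≤ q) ∨
        (a.val = 2 ∧ q + 1 ≤ b.val ∧ b.val ≤ q + k) ∨
        (q + k + 1 ≤ b.val ∧ b.val ≤ q + k + l ∧ a.val = b.val - (q + k) + 2) ∨
        (a.val = 1 ∧ q + k + l + 1 ≤ b.val)) ∨
       ((b.val = 0 ∧ a.val = 1) ∨ (b.val = 0 ∧ 2 ≤ a.val ∧ a.val ≤ q) ∨
        (b.val = 2 ∧ q + 1 ≤ a.val ∧ a.val ≤ q + k) ∨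
        (q + k + 1 ≤ a.val ∧ a.val ≤ q + k + l ∧ b.val = a.val - (q + k) + 2) ∨
        (b.val = 1 ∧ q + k + l + 1 ≤ a.val))) := by
  simp [BTree, SimpleGraph.fromRel_adj, Fin.ext_iff]

theorem BTree_atMostOneLowerNeighbor {p q k l : ℕ} (hl : l + 2 ≤ q) :
    AtMostOneLowerNeighbor (BTree p q k l) := by
  intro a b c hac hbc ha hb
  rw [BTree_adj_iff] at hac hbc
  rw [Fin.lt_def] at ha hb
  rw [Fin.ext_iff]
  omega

section Degrees

open scoped Classical in
theorem degree_eq_card_of_adj_iff {V : Type*} [Fintype V] {G : SimpleGraph V} {a : V}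
    {s : Finset V} (h : ∀ b, G.Adj a b ↔ b ∈ s) : G.degree a = s.card := by
  rw [← card_neighborFinset_eq_degree]
  congr 1
  ext b
  simp [h]

open scoped Classical in
theorem degree_BTree_two_zero_of_val_eq_two {p q : ℕ} (hp : 4 ≤ p) (hpq : p ≤ q)
    {a : Fin (p + q)} (ha : a.val = 2) : (BTree p q 2 0).degree a = 3 := by
  obtain ⟨u, hu⟩ : ∃ u : Fin (p + q), u.val = 0 := ⟨⟨0, by omega⟩, rfl⟩
  obtain ⟨x, hx⟩ : ∃ x : Fin (p + q), x.val = q + 1 := ⟨⟨q + 1, by omega⟩, rfl⟩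
  obtain ⟨y, hy⟩ : ∃ y : Fin (p + q), y.val = q + 2 := ⟨⟨q + 2, by omega⟩, rfl⟩
  rw [degree_eq_card_of_adj_iff (s := {u, x, y})]
  · refine Finset.card_eq_three.2 ⟨u, x, y, ?_, ?_, ?_, rfl⟩ <;> rw [ne_eq, Fin.ext_iff] <;> omega
  · intro b
    simp only [BTree_adj_iff, Finset.mem_insert, Finset.mem_singleton, Fin.ext_iff]
    omega

open scoped Classical in
theorem degree_BTree_zero_two_of_val_eq_three_or_four {p q : ℕ} (hp : 4 ≤ p) (hpq : p ≤ q)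
    {a : Fin (p + q)} (ha : a.val = 3 ∨ a.val = 4) : (BTree p q 0 2).degree a = 2 := by
  obtain ⟨u, hu⟩ : ∃ u : Fin (p + q), u.val = 0 := ⟨⟨0, by omega⟩, rfl⟩
  obtain ⟨x, hx⟩ : ∃ x : Fin (p + q), x.val + 2 = q + a.val :=
    ⟨⟨q + a.val - 2, by omega⟩, by dsimp only; omega⟩
  rw [degree_eq_card_of_adj_iff (s := {u, x}), Finset.card_pair]
  · rw [ne_eq, Fin.ext_iff]
    omega
  · intro b
    simp only [BTree_adj_iff, Finset.mem_insert, Finset.mem_singleton, Fin.ext_iff]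
    omega

open scoped Classical in
/-- A neighbor of `u` other than `v` that carries no leaves is itself a leaf. -/
theorem degree_BTree_eq_one {p q k l : ℕ} {a : Fin (p + q)} (h2 : 2 ≤ a.val)
    (haq : a.val ≤ q) (hk : a.val = 2 → k = 0) (hl : a.val = 2 ∨ l + 2 < a.val) :
    (BTree p q k l).degree a = 1 := by
  obtain ⟨u, hu⟩ : ∃ u : Fin (p + q), u.val = 0 := ⟨⟨0, by omega⟩, rfl⟩
  rw [degree_eq_card_of_adj_iff (s := {u}), Finset.card_singleton]
  intro b
  simp only [BTree_adj_iff, Finset.mem_singleton, Fin.ext_iff]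
  omega

open scoped Classical in
/-- The vertices beyond `q` are leaves. -/
theorem degree_BTree_eq_one_of_lt {p q k l : ℕ} (hl : l + 2 ≤ q) {a : Fin (p + q)}
    (ha : q < a.val) : (BTree p q k l).degree a = 1 := by
  obtain ⟨m, hm⟩ : ∃ m, m =
      if a.val ≤ q + k then 2 else if a.val ≤ q + k + l then a.val - (q + k) + 2 else 1 := ⟨_, rfl⟩
  obtain ⟨x, hx⟩ : ∃ x : Fin (p + q), x.val = m := ⟨⟨m, by split_ifs at hm <;> omega⟩, rfl⟩
  rw [degree_eq_card_of_adj_iff (s := {x}), Finset.card_singleton]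
  intro b
  simp only [BTree_adj_iff, Finset.mem_singleton, Fin.ext_iff]
  split_ifs at hm <;> omega

open scoped Classical in
theorem degree_BTree_two_zero_eq_zero_two {p q : ℕ} (hp : 4 ≤ p) (hpq : p ≤ q)
    {a : Fin (p + q)} (h2 : a.val ≠ 2) (h3 : a.val ≠ 3) (h4 : a.val ≠ 4) :
    (BTree p q 2 0).degree a = (BTree p q 0 2).degree a := by
  by_cases haq : q < a.val
  · rw [degree_BTree_eq_one_of_lt (by omega) haq, degree_BTree_eq_one_of_lt (by omega) haq]
  by_cases h5 : 5 ≤ a.val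
  · rw [degree_BTree_eq_one (by omega) (by omega) (by omega) (by omega),
      degree_BTree_eq_one (by omega) (by omega) (by omega) (by omega)]
  · rw [degree_eq_card_of_adj_iff (G := BTree p q 2 0)
      (s := (BTree p q 0 2).neighborFinset a), card_neighborFinset_eq_degree]
    intro b
    rw [mem_neighborFinset, BTree_adj_iff, BTree_adj_iff]
    obtain h | h : a.val = 0 ∨ a.val = 1 := by omega
    all_goals
      rw [h]
      omega

open scoped Classical in
/-- Only the vertices `2`, `3`, `4` have different degrees in `B_{p,q}^{2,0}` and
`B_{p,q}^{0,2}`: the degrees are `3, 1, 1` in the former and `1, 2, 2` in the latter. -/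
theorem sum_degree_BTree_sub {p q : ℕ} (hp : 4 ≤ p) (hpq : p ≤ q) (f : ℕ → ℝ) :
    ∑ a, f ((BTree p q 2 0).degree a) - ∑ a, f ((BTree p q 0 2).degree a) =
      f 3 + f 1 - 2 * f 2 := by
  obtain ⟨x, hx⟩ : ∃ x : Fin (p + q), x.val = 2 := ⟨⟨2, by omega⟩, rfl⟩
  obtain ⟨y, hy⟩ : ∃ y : Fin (p + q), y.val = 3 := ⟨⟨3, by omega⟩, rfl⟩
  obtain ⟨z, hz⟩ : ∃ z : Fin (p + q), z.val = 4 := ⟨⟨4, by omega⟩, rfl⟩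
  have h_pointwise (a : Fin (p + q)) :
      f ((BTree p q 2 0).degree a) - f ((BTree p q 0 2).degree a) =
        (if a = x then f 3 - f 1 else 0) + (if a = y then f 1 - f 2 else 0) +
        (if a = z then f 1 - f 2 else 0) := by
    simp only [Fin.ext_iff, hx, hy, hz]
    by_cases h2 : a.val = 2
    · rw [degree_BTree_two_zero_of_val_eq_two hp hpq h2,
        degree_BTree_eq_one (by omega) (by omega) (by omega) (by omega)]
      simp [h2]
    by_cases h34 : a.val = 3 ∨ a.val = 4
    · rw [degree_BTree_zero_two_of_val_eq_three_or_four hp hpq h34,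
        degree_BTree_eq_one (by omega) (by omega) (by omega) (by omega)]
      rcases h34 with h | h <;> simp [h]
    rw [not_or] at h34
    rw [degree_BTree_two_zero_eq_zero_two hp hpq h2 h34.1 h34.2]
    simp [h2, h34]
  rw [← Finset.sum_sub_distrib]
  simp only [h_pointwise, Finset.sum_add_distrib, Finset.sum_ite_eq', Finset.mem_univ, if_true]
  ring

end Degrees

/-- For `4 ≤ p ≤ q` and `n = p + q`:
`S_i(B_{p,q}^{0,2}) = S_i(B_{p,q}^{2,0})` for `i = 0,1,2,3`, and
`S_4(B_{p,q}^{2,0}) - S_4(B_{p,q}^{0,2}) = 4 > 0`; in particular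
`B_{p,q}^{0,2} ≺_s B_{p,q}^{2,0}`. -/
theorem stmt_17 (p q : ℕ) (hp : 4 ≤ p) (hpq : p ≤ q) :
    (∀ i < 4, spectralMoment (BTree p q 0 2) i = spectralMoment (BTree p q 2 0) i) ∧
    spectralMoment (BTree p q 2 0) 4 - spectralMoment (BTree p q 0 2) 4 = 4 ∧
    SLt (BTree p q 0 2) (BTree p q 2 0) := by
  classical
  have hlow₁ : AtMostOneLowerNeighbor (BTree p q 0 2) :=
    BTree_atMostOneLowerNeighbor (by omega)
  have hlow₂ : AtMostOneLowerNeighbor (BTree p q 2 0) :=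
    BTree_atMostOneLowerNeighbor (by omega)
  have heq : ∀ i < 4, spectralMoment (BTree p q 0 2) i = spectralMoment (BTree p q 2 0) i := by
    intro i hi
    interval_cases i
    · rw [spectralMoment_zero, spectralMoment_zero]
    · rw [spectralMoment_one, spectralMoment_one]
    · have := sum_degree_BTree_sub hp hpq (fun d => d)
      rw [spectralMoment_two, spectralMoment_two]
      norm_num at this
      linarith
    · rw [spectralMoment_three _ hlow₁.not_triangle, spectralMoment_three _ hlow₂.not_triangle]
  have hfour : spectralMoment (BTree p q 2 0) 4 - spectralMoment (BTree p q 0 2) 4 = 4 := by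
    rw [spectralMoment_four _ hlow₁.common_neighbor_unique,
      spectralMoment_four _ hlow₂.common_neighbor_unique,
      sum_degree_BTree_sub hp hpq (fun d => 2 * (d : ℝ) ^ 2 - d)]
    norm_num
  refine ⟨heq, hfour, 4, by norm_num, ?_, heq, by linarith⟩
  rw [Fintype.card_fin]
  omega
end

section
/- Let 4 ≤ p < q and n = p + q. Then S_i(D_{p,q}^{0,1}) = S_i(B_{p,q}^{0,2}) for i = 0, 1, 2, 3 and S_4(D_{p,q}^{0,1}) − S_4(B_{p,q}^{0,2}) = 4(2p − q − 3). Consequently: if 2p > q + 3 then B_{p,q}^{0,2} ≺_s D_{p,q}^{0,1}; if 2p < q + 3 then D_{p,q}^{0,1} ≺_s B_{p,q}^{0,2}; and if 2p = q + 3 then S_i(D_{p,q}^{0,1}) = S_i(B_{p,q}^{0,2}) for i = 0, 1, …, 5 while S_6(B_{p,q}^{0,2}) − S_6(D_{p,q}^{0,1}) = 3((q − 2)² − 1) > 0, so again D_{p,q}^{0,1} ≺_s B_{p,q}^{0,2}. -/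
open SimpleGraph

open Matrix

lemma Matrix.trace_mul_pow_comm {m n R : Type*} [Fintype m] [Fintype n] [DecidableEq m]
    [DecidableEq n] [CommRing R] (U : Matrix m n R) (W : Matrix n m R) (k : ℕ) :
    trace ((U * W) ^ (k + 1)) = trace ((W * U) ^ (k + 1)) := by
  have h : ∀ k : ℕ, (U * W) ^ k * U = U * (W * U) ^ k := by
    intro k
    induction k with
    | zero => simp
    | succ k ih => rw [pow_succ', pow_succ', Matrix.mul_assoc, ih]; simp only [Matrix.mul_assoc]
  rw [pow_succ, ← Matrix.mul_assoc, h, Matrix.mul_assoc, Matrix.trace_mul_comm, Matrix.mul_assoc,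
    ← pow_succ]

/-- The adjacency structure of the four centers of a depth-two tree: center `0` is the parent of
the three others. -/
def centerMat : Matrix (Fin 4) (Fin 4) ℝ :=
  !![0, 0, 0, 0; 1, 0, 0, 0; 1, 0, 0, 0; 1, 0, 0, 0]

/-- A compression of the adjacency matrix of a depth-two tree in which the root has `d 0` children
and three of these children have `d 1`, `d 2`, `d 3` children. -/
def reducedMat (d : Fin 4 → ℝ) : Matrix (Fin 4 ⊕ Fin 4) (Fin 4 ⊕ Fin 4) ℝ :=
  fromBlocks centerMatᵀ (diagonal d) 1 centerMat

lemma centerMat_mul_self : centerMat * centerMat = 0 := by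
  ext i j
  fin_cases i <;> fin_cases j <;> simp [centerMat, Matrix.mul_apply, Fin.sum_univ_four]

lemma diagonal_fin_four (d : Fin 4 → ℝ) :
    diagonal d = !![d 0, 0, 0, 0; 0, d 1, 0, 0; 0, 0, d 2, 0; 0, 0, 0, d 3] := by
  ext i j
  fin_cases i <;> fin_cases j <;> simp [diagonal]

lemma reducedMat_sq (d : Fin 4 → ℝ) :
    reducedMat d ^ 2 = fromBlocks
      (diagonal d)
      !![0, d 1, d 2, d 3; d 1, 0, 0, 0; d 2, 0, 0, 0; d 3, 0, 0, 0]
      !![0, 1, 1, 1; 1, 0, 0, 0; 1, 0, 0, 0; 1, 0, 0, 0]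
      (diagonal d) := by
  rw [reducedMat, pow_two, fromBlocks_multiply, ← transpose_mul, centerMat_mul_self]
  congr 1
  · simp
  · ext i j
    fin_cases i <;> fin_cases j <;> simp [centerMat]
  · ext i j
    fin_cases i <;> fin_cases j <;> simp [centerMat]
  · simp

lemma reducedMat_cube (d : Fin 4 → ℝ) :
    reducedMat d ^ 3 = fromBlocks
      !![0, d 0 + d 1, d 0 + d 2, d 0 + d 3; d 1, 0, 0, 0; d 2, 0, 0, 0; d 3, 0, 0, 0]
      (diagonal ![d 0 ^ 2 + d 1 + d 2 + d 3, d 1 ^ 2, d 2 ^ 2, d 3 ^ 2])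
      !![d 0, 0, 0, 0; 0, d 1 + 1, 1, 1; 0, 1, d 2 + 1, 1; 0, 1, 1, d 3 + 1]
      !![0, d 1, d 2, d 3; d 0 + d 1, 0, 0, 0; d 0 + d 2, 0, 0, 0; d 0 + d 3, 0, 0, 0] := by
  rw [pow_succ', reducedMat_sq, reducedMat, fromBlocks_multiply, diagonal_fin_four,
    diagonal_fin_four]
  congr 1 <;> ext i j <;> fin_cases i <;> fin_cases j <;>
    simp [centerMat, Matrix.mul_apply, Fin.sum_univ_four] <;> ring

lemma trace_reducedMat (d : Fin 4 → ℝ) : trace (reducedMat d ^ 1) = 0 := by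
  simp [reducedMat, trace, centerMat, Fin.sum_univ_four]

lemma trace_reducedMat_sq (d : Fin 4 → ℝ) :
    trace (reducedMat d ^ 2) = 2 * (d 0 + d 1 + d 2 + d 3) := by
  simp [reducedMat_sq, trace, Fin.sum_univ_four]
  ring

lemma trace_reducedMat_cube (d : Fin 4 → ℝ) : trace (reducedMat d ^ 3) = 0 := by
  simp [reducedMat_cube, trace, Fin.sum_univ_four]

lemma trace_reducedMat_pow_four (d : Fin 4 → ℝ) :
    trace (reducedMat d ^ 4) =
      2 * (d 0 ^ 2 + d 1 ^ 2 + d 2 ^ 2 + d 3 ^ 2) + 4 * (d 1 + d 2 + d 3) := by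
  rw [show reducedMat d ^ 4 = reducedMat d ^ (2 + 2) from rfl, pow_add, reducedMat_sq, fromBlocks_multiply, diagonal_fin_four]
  simp [trace, Fin.sum_univ_four]
  ring

lemma trace_reducedMat_pow_five (d : Fin 4 → ℝ) : trace (reducedMat d ^ 5) = 0 := by
  rw [show reducedMat d ^ 5 = reducedMat d ^ (2 + 3) from rfl, pow_add, reducedMat_sq, reducedMat_cube, fromBlocks_multiply,
    diagonal_fin_four, diagonal_fin_four]
  simp [trace, Fin.sum_univ_four]

lemma trace_reducedMat_pow_six (d : Fin 4 → ℝ) :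
    trace (reducedMat d ^ 6) =
      2 * (d 0 ^ 3 + d 1 ^ 3 + d 2 ^ 3 + d 3 ^ 3) + 6 * d 0 * (d 1 + d 2 + d 3)
        + 6 * (d 1 ^ 2 + d 2 ^ 2 + d 3 ^ 2) := by
  rw [show reducedMat d ^ 6 = reducedMat d ^ (3 + 3) from rfl, pow_add, reducedMat_cube, fromBlocks_multiply, diagonal_fin_four]
  simp [trace, Fin.sum_univ_four]
  ring

/-- Moments of a depth-two tree with centers `c 0, …, c 3`, where `child i` is the set of children
of `c i`, the centers `c 1, c 2, c 3` are children of the root `c 0`, and every edge joins a center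
to one of its children. -/
lemma spectralMoment_eq_trace_reducedMat {V : Type*} [Fintype V] [DecidableEq V]
    (G : SimpleGraph V) (c : Fin 4 → V) (hc : Function.Injective c) (child : Fin 4 → Finset V)
    (hdisj : ∀ i j, i ≠ j → Disjoint (child i) (child j))
    (hchild : ∀ i j, c i ∈ child j ↔ j = 0 ∧ i ≠ 0)
    (hadj : ∀ x y, G.Adj x y ↔ ∃ i, (x = c i ∧ y ∈ child i) ∨ (y = c i ∧ x ∈ child i)) (k : ℕ) :
    spectralMoment G (k + 1) = trace (reducedMat (fun i => ((child i).card : ℝ)) ^ (k + 1)) := by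
  set E : Matrix V (Fin 4) ℝ := of fun x i => if x = c i then 1 else 0 with hE
  set F : Matrix V (Fin 4) ℝ := of fun x i => if x ∈ child i then 1 else 0 with hF
  have hEE : Eᵀ * E = 1 := by
    ext i j
    simp [hE, Matrix.mul_apply, Matrix.one_apply, hc.eq_iff, eq_comm]
  have hEF : Eᵀ * F = centerMat := by
    ext i j
    simp only [hE, hF, Matrix.mul_apply, transpose_apply, of_apply, ite_mul, one_mul, zero_mul,
      Finset.sum_ite_eq', Finset.mem_univ, if_true, hchild]
    fin_cases i <;> fin_cases j <;> simp [centerMat]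
  have hFF : Fᵀ * F = diagonal (fun i => ((child i).card : ℝ)) := by
    ext i j
    rcases eq_or_ne i j with rfl | hij
    · simp [hF, Matrix.mul_apply]
    · rw [diagonal_apply_ne _ hij, Matrix.mul_apply]
      refine Finset.sum_eq_zero fun x _ => ?_
      by_cases hx : x ∈ child i
      · simp [hF, Finset.disjoint_left.1 (hdisj i j hij) hx]
      · simp [hF, hx]
  have hdisj' : ∀ {x i j}, x ∈ child i → j ≠ i → x ∉ child j := fun hx hij =>
    Finset.disjoint_left.1 (hdisj _ _ hij.symm) hx
  have hasymm : ∀ {x y i}, x = c i → y ∈ child i → ∀ j, ¬ (x ∈ child j ∧ y = c j) := by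
    rintro x y i rfl hy j ⟨hx, rfl⟩
    exact ((hchild j i).1 hy).2 ((hchild i j).1 hx).1
  have hA : adjMat G = fromCols E F * fromRows Fᵀ Eᵀ := by
    rw [fromCols_mul_fromRows]
    ext x y
    simp only [adjMat, of_apply, Matrix.add_apply, Matrix.mul_apply, hE, hF, transpose_apply,
      ← ite_and, ite_mul, one_mul, zero_mul, ← Finset.sum_add_distrib]
    by_cases h : G.Adj x y
    · rw [if_pos h]
      obtain ⟨i, hi⟩ := (hadj x y).1 h
      rw [Finset.sum_eq_single i]
      · rcases hi with ⟨hx, hy⟩ | ⟨hy, hx⟩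
        · rw [if_pos ⟨hx, hy⟩, if_neg (hasymm hx hy i), add_zero]
        · rw [if_neg fun h => hasymm hy hx i h.symm, if_pos ⟨hx, hy⟩, zero_add]
      · intro j _ hj
        rcases hi with ⟨hx, hy⟩ | ⟨hy, hx⟩
        · rw [if_neg fun h => hdisj' hy hj h.2, if_neg (hasymm hx hy j), add_zero]
        · rw [if_neg fun h => hasymm hy hx j h.symm, if_neg fun h => hdisj' hx hj h.1, add_zero]
      · simp
    · rw [if_neg h]
      refine (Finset.sum_eq_zero fun i _ => ?_).symm
      have := fun hi => h ((hadj x y).2 ⟨i, hi⟩)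
      rw [if_neg (fun hi => this (Or.inl hi)), if_neg (fun hi => this (Or.inr hi.symm)), add_zero]
  rw [spectralMoment, hA, trace_mul_pow_comm, fromRows_mul_fromCols, hEE, hEF, hFF, reducedMat,
    ← hEF, transpose_mul, transpose_transpose]

lemma spectralMoment_DTree (p q : ℕ) (hp : 4 ≤ p) (hpq : p < q) (k : ℕ) :
    spectralMoment (DTree p q 0 1) (k + 1) =
      trace (reducedMat ![(p : ℝ), (q : ℝ) - 2, 1, 0] ^ (k + 1)) := by
  let s : Fin 4 → Finset ℕ := ![(Finset.range (p + 1)).erase 1, Finset.Ico (p + 2) (p + q), {p + 1}, ∅]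
  have hs : ∀ i, ∀ m ∈ s i, m < p + q := by
    intro i m
    fin_cases i <;> simp [s] <;> omega
  rw [spectralMoment_eq_trace_reducedMat (DTree p q 0 1)
    ![⟨1, by omega⟩, ⟨0, by omega⟩, ⟨3, by omega⟩, ⟨2, by omega⟩]
    ?_ (fun i => (s i).attachFin (hs i))]
  · congr 3
    ext i
    rw [Finset.card_attachFin]
    fin_cases i <;> simp [s]
    · rw [Finset.card_erase_of_mem (by simp; omega), Finset.card_range, Nat.add_sub_cancel]
    · rw [show p + q - (p + 2) = q - 2 by omega, Nat.cast_sub (by omega), Nat.cast_ofNat]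
  · intro i j hij
    rw [Finset.disjoint_left]
    revert hij
    fin_cases i <;> fin_cases j <;> simp [s] <;> omega
  · intro i j
    fin_cases i <;> fin_cases j <;> simp [s] <;> omega
  · intro x y
    simp [DTree, SimpleGraph.fromRel_adj, Fin.exists_fin_succ, Fin.ext_iff, s]
    grind (splits := 20)
  · intro i j
    fin_cases i <;> fin_cases j <;> simp

lemma spectralMoment_BTree (p q : ℕ) (hp : 4 ≤ p) (hpq : p < q) (k : ℕ) :
    spectralMoment (BTree p q 0 2) (k + 1) =
      trace (reducedMat ![(q : ℝ), (p : ℝ) - 3, 1, 1] ^ (k + 1)) := by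
  let s : Fin 4 → Finset ℕ := ![Finset.Ico 1 (q + 1), Finset.Ico (q + 3) (p + q), {q + 1}, {q + 2}]
  have hs : ∀ i, ∀ m ∈ s i, m < p + q := by
    intro i m
    fin_cases i <;> simp [s] <;> omega
  rw [spectralMoment_eq_trace_reducedMat (BTree p q 0 2)
    ![⟨0, by omega⟩, ⟨1, by omega⟩, ⟨3, by omega⟩, ⟨4, by omega⟩]
    ?_ (fun i => (s i).attachFin (hs i))]
  · congr 3
    ext i
    rw [Finset.card_attachFin]
    fin_cases i <;> simp [s]
    rw [show p + q - (q + 3) = p - 3 by omega, Nat.cast_sub (by omega), Nat.cast_ofNat]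
  · intro i j hij
    rw [Finset.disjoint_left]
    revert hij
    fin_cases i <;> fin_cases j <;> simp [s] <;> omega
  · intro i j
    fin_cases i <;> fin_cases j <;> simp [s] <;> omega
  · intro x y
    simp [BTree, SimpleGraph.fromRel_adj, Fin.exists_fin_succ, Fin.ext_iff, s]
    grind (splits := 20)
  · intro i j
    fin_cases i <;> fin_cases j <;> simp

/-- For `4 ≤ p < q` and `n = p + q`:
`S_i(D_{p,q}^{0,1}) = S_i(B_{p,q}^{0,2})` for `i = 0,1,2,3` and
`S_4(D_{p,q}^{0,1}) - S_4(B_{p,q}^{0,2}) = 4(2p - q - 3)`. Consequently: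
if `2p > q + 3` then `B_{p,q}^{0,2} ≺_s D_{p,q}^{0,1}`; if `2p < q + 3` then
`D_{p,q}^{0,1} ≺_s B_{p,q}^{0,2}`; and if `2p = q + 3` then
`S_i(D_{p,q}^{0,1}) = S_i(B_{p,q}^{0,2})` for `i = 0,…,5` while
`S_6(B_{p,q}^{0,2}) - S_6(D_{p,q}^{0,1}) = 3((q - 2)² - 1) > 0`, so again
`D_{p,q}^{0,1} ≺_s B_{p,q}^{0,2}`. -/
theorem stmt_19 (p q : ℕ) (hp : 4 ≤ p) (hpq : p < q) :
    (∀ i < 4, spectralMoment (DTree p q 0 1) i = spectralMoment (BTree p q 0 2) i) ∧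
    spectralMoment (DTree p q 0 1) 4 - spectralMoment (BTree p q 0 2) 4
      = 4 * (2 * (p : ℝ) - (q : ℝ) - 3) ∧
    (q + 3 < 2 * p → SLt (BTree p q 0 2) (DTree p q 0 1)) ∧
    (2 * p < q + 3 → SLt (DTree p q 0 1) (BTree p q 0 2)) ∧
    (2 * p = q + 3 →
      (∀ i < 6, spectralMoment (DTree p q 0 1) i = spectralMoment (BTree p q 0 2) i) ∧
      spectralMoment (BTree p q 0 2) 6 - spectralMoment (DTree p q 0 1) 6
        = 3 * (((q : ℝ) - 2) ^ 2 - 1) ∧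
      0 < spectralMoment (BTree p q 0 2) 6 - spectralMoment (DTree p q 0 1) 6 ∧
      SLt (DTree p q 0 1) (BTree p q 0 2)) := by
  have hD := spectralMoment_DTree p q hp hpq
  have hB := spectralMoment_BTree p q hp hpq
  have h0 : spectralMoment (DTree p q 0 1) 0 = spectralMoment (BTree p q 0 2) 0 := by
    simp [spectralMoment]
  have h1 : spectralMoment (DTree p q 0 1) 1 = spectralMoment (BTree p q 0 2) 1 := by
    rw [hD 0, hB 0, trace_reducedMat, trace_reducedMat]
  have h2 : spectralMoment (DTree p q 0 1) 2 = spectralMoment (BTree p q 0 2) 2 := by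
    rw [hD 1, hB 1, trace_reducedMat_sq, trace_reducedMat_sq]
    simp
    ring
  have h3 : spectralMoment (DTree p q 0 1) 3 = spectralMoment (BTree p q 0 2) 3 := by
    rw [hD 2, hB 2, trace_reducedMat_cube, trace_reducedMat_cube]
  have h4 : spectralMoment (DTree p q 0 1) 4 - spectralMoment (BTree p q 0 2) 4
      = 4 * (2 * (p : ℝ) - (q : ℝ) - 3) := by
    rw [hD 3, hB 3, trace_reducedMat_pow_four, trace_reducedMat_pow_four]
    simp
    ring
  have h5 : spectralMoment (DTree p q 0 1) 5 = spectralMoment (BTree p q 0 2) 5 := by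
    rw [hD 4, hB 4, trace_reducedMat_pow_five, trace_reducedMat_pow_five]
  have hlow : ∀ i < 4, spectralMoment (DTree p q 0 1) i = spectralMoment (BTree p q 0 2) i := by
    intro i hi
    interval_cases i
    exacts [h0, h1, h2, h3]
  have hcard : Fintype.card (Fin (p + q)) = p + q := Fintype.card_fin _
  refine ⟨hlow, h4, fun h => ?_, fun h => ?_, fun h => ?_⟩
  · have h' : (q : ℝ) + 3 < 2 * p := by exact_mod_cast h
    exact ⟨4, by omega, by omega, fun i hi => (hlow i hi).symm, by linarith⟩
  · have h' : 2 * (p : ℝ) < q + 3 := by exact_mod_cast h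
    exact ⟨4, by omega, by omega, hlow, by linarith⟩
  · have h' : (q : ℝ) = 2 * p - 3 := by
      have : 2 * (p : ℝ) = q + 3 := by exact_mod_cast h
      linarith
    have hp' : (4 : ℝ) ≤ p := by exact_mod_cast hp
    have hlow6 : ∀ i < 6,
        spectralMoment (DTree p q 0 1) i = spectralMoment (BTree p q 0 2) i := by
      have h4' : spectralMoment (DTree p q 0 1) 4 = spectralMoment (BTree p q 0 2) 4 := by
        linarith
      intro i hi
      interval_cases i
      exacts [h0, h1, h2, h3, h4', h5]
    have h6 : spectralMoment (BTree p q 0 2) 6 - spectralMoment (DTree p q 0 1) 6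
        = 3 * (((q : ℝ) - 2) ^ 2 - 1) := by
      rw [hD 5, hB 5, trace_reducedMat_pow_six, trace_reducedMat_pow_six]
      simp [h']
      ring
    have hpos : 0 < spectralMoment (BTree p q 0 2) 6 - spectralMoment (DTree p q 0 1) 6 := by
      rw [h6, h']
      nlinarith
    exact ⟨hlow6, h6, hpos, 6, by omega, by omega, hlow6, by linarith⟩
end
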